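/- (Cost-dependent Bayesian lower bound.) Let Θ be a finite parameter space, ρ : Θ × Θ → ℝ₊ a pseudometric, and for each θ ∈ Θ let P_θⁿ be the n-fold product of a probability measure P_θ on an observation space O. Let μ be any joint probability distribution of a random pair (θ, θ′) ∈ Θ × Θ whose two marginal distributions are equal. Then for any c ∈ (0,1), the minimax risk R*_ρ satisfies R*_ρ ≥ E_{(θ,θ′) ∼ μ}[ ρ(θ, θ′) · ( min(c, 1−c) − I_{f_c}(P_θⁿ, P_{θ′}ⁿ) ) ]. -/

import Mathlib

open MeasureTheory ProbabilityTheory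

/-- The `c`-primitive `f`-divergence in the form
`I_{f_c}(P,Q) = min(c, 1−c) − ∫ min((1−c)·dQ, c·dP)`, the integral being taken of the
densities with respect to the common dominating measure `P + Q`. -/
noncomputable def Ifc {Ω : Type*} [MeasurableSpace Ω] (c : ℝ) (P Q : Measure Ω) : ℝ :=
  min c (1 - c)
    - ∫ x, min ((1 - c) * ((Q.rnDeriv (P + Q)) x).toReal)
              (c * ((P.rnDeriv (P + Q)) x).toReal) ∂(P + Q)

/-!
A loss separates two parameters by `δ` if every decision costs at least `δ` in total under the two;
each estimator then acts as a test between them. Let `f` and `g` be its conditional losses given the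
observation, so that `f + g ≥ δ`, and `p`, `q` the densities of the observation. Integrating the
pointwise bound `δ * min ((1 - c) q) (c p) ≤ c p * f + (1 - c) q * g` shows that `δ` times the
affinity `min c (1 - c) - Ifc c P Q` is at most the average of the two risks with weights `c` and
`1 - c`, hence at most the worst-case risk. This holds for each pair of parameters separately, and
so on average over the law of the pair.
-/

lemma mul_min_le_mul_add_mul {u v f g r : ℝ} (hf : 0 ≤ f) (hg : 0 ≤ g) (hu : 0 ≤ u) (hv : 0 ≤ v)
    (hr : r ≤ f + g) : r * min u v ≤ v * f + u * g :=
  calc r * min u v ≤ (f + g) * min u v := mul_le_mul_of_nonneg_right hr (le_min hu hv)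
    _ = min u v * f + min u v * g := by ring
    _ ≤ v * f + u * g := by
      gcongr
      exacts [min_le_right u v, min_le_left u v]

lemma mul_min_sub_Ifc_le_integral_add_integral {Ω : Type*} [MeasurableSpace Ω] {P Q : Measure Ω}
    [IsFiniteMeasure P] [IsFiniteMeasure Q] {c r : ℝ} (hc : c ∈ Set.Icc 0 1) {f g : Ω → ℝ}
    (hf : Integrable f P) (hg : Integrable g Q) (hf_nonneg : ∀ x, 0 ≤ f x)
    (hg_nonneg : ∀ x, 0 ≤ g x) (hr : ∀ x, r ≤ f x + g x) :
    r * (min c (1 - c) - Ifc c P Q) ≤ c * ∫ x, f x ∂P + (1 - c) * ∫ x, g x ∂Q := by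
  let p x := (P.rnDeriv (P + Q) x).toReal
  let q x := (Q.rnDeriv (P + Q) x).toReal
  have hP : P ≪ P + Q := Measure.absolutelyContinuous_of_le (Measure.le_add_right le_rfl)
  have hQ : Q ≪ P + Q := Measure.absolutelyContinuous_of_le (Measure.le_add_left le_rfl)
  have hpf : Integrable (fun x => c * (p x * f x)) (P + Q) :=
    ((integrable_rnDeriv_smul_iff hP).2 hf).const_mul c
  have hqg : Integrable (fun x => (1 - c) * (q x * g x)) (P + Q) :=
    ((integrable_rnDeriv_smul_iff hQ).2 hg).const_mul (1 - c)
  have hmin : Integrable (fun x => min ((1 - c) * q x) (c * p x)) (P + Q) :=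
    (Measure.integrable_toReal_rnDeriv.const_mul _).inf
      (Measure.integrable_toReal_rnDeriv.const_mul _)
  have hpointwise (x : Ω) : r * min ((1 - c) * q x) (c * p x) ≤
      c * (p x * f x) + (1 - c) * (q x * g x) := by
    simpa only [mul_assoc] using mul_min_le_mul_add_mul (hf_nonneg x) (hg_nonneg x)
      (mul_nonneg (sub_nonneg.2 hc.2) ENNReal.toReal_nonneg)
      (mul_nonneg hc.1 ENNReal.toReal_nonneg) (hr x)
  calc r * (min c (1 - c) - Ifc c P Q)
      = ∫ x, r * min ((1 - c) * q x) (c * p x) ∂(P + Q) := by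
        rw [Ifc, sub_sub_cancel, integral_const_mul]
    _ ≤ ∫ x, c * (p x * f x) + (1 - c) * (q x * g x) ∂(P + Q) :=
        integral_mono (hmin.const_mul r) (hpf.add hqg) hpointwise
    _ = c * ∫ x, f x ∂P + (1 - c) * ∫ x, g x ∂Q := by
        rw [integral_add hpf hqg, integral_const_mul, integral_const_mul,
          ← integral_rnDeriv_smul hP, ← integral_rnDeriv_smul hQ]
        rfl

/-- The expected loss `E_{o ∼ P} E_{t ∼ κ(o)}[ℓ t]` of a randomized estimator `κ` when the
observation has law `P`; the loss `ℓ` is the one at the true parameter. It is a Bochner integral,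
hence meaningful only for integrable losses. -/
noncomputable def estimatorRisk {Ω 𝓐 : Type*} [MeasurableSpace Ω] [MeasurableSpace 𝓐]
    (ℓ : 𝓐 → ℝ) (κ : Kernel Ω 𝓐) (P : Measure Ω) : ℝ :=
  ∫ o, ∫ t, ℓ t ∂(κ o) ∂P

/-- The real-valued minimax risk `inf_κ sup_θ E_{o ∼ P_θ} E_{t ∼ κ(o)}[ℓ θ t]`, the infimum being
over all Markov kernels. Unlike `ProbabilityTheory.minimaxRisk`, it takes values in `ℝ`, so that an
unbounded supremum is `0`; it is the minimax risk only when the risks are bounded. -/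
noncomputable def realMinimaxRisk {Θ Ω 𝓐 : Type*} [MeasurableSpace Ω] [MeasurableSpace 𝓐]
    (ℓ : Θ → 𝓐 → ℝ) (P : Θ → Measure Ω) : ℝ :=
  ⨅ κ : {κ : Kernel Ω 𝓐 // IsMarkovKernel κ}, ⨆ θ, estimatorRisk (ℓ θ) κ.1 (P θ)

section Risk

variable {Ω 𝓐 : Type*} [MeasurableSpace Ω] [MeasurableSpace 𝓐] {κ : Kernel Ω 𝓐} [IsMarkovKernel κ]

lemma integral_mem_Icc {ν : Measure 𝓐} [IsProbabilityMeasure ν] {a b : ℝ} {ℓ : 𝓐 → ℝ}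
    (hℓ : Measurable ℓ) (hℓ_mem : ∀ t, ℓ t ∈ Set.Icc a b) : ∫ t, ℓ t ∂ν ∈ Set.Icc a b :=
  (convex_Icc a b).integral_mem isClosed_Icc (ae_of_all _ hℓ_mem)
    (.of_mem_Icc a b hℓ.aemeasurable (ae_of_all _ hℓ_mem))

lemma estimatorRisk_mem_Icc {P : Measure Ω} [IsProbabilityMeasure P] {a b : ℝ} {ℓ : 𝓐 → ℝ}
    (hℓ : Measurable ℓ) (hℓ_mem : ∀ t, ℓ t ∈ Set.Icc a b) :
    estimatorRisk ℓ κ P ∈ Set.Icc a b :=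
  integral_mem_Icc hℓ.stronglyMeasurable.integral_kernel.measurable fun _ =>
    integral_mem_Icc hℓ hℓ_mem

lemma mul_min_sub_Ifc_le_estimatorRisk_add_estimatorRisk {P Q : Measure Ω} [IsFiniteMeasure P]
    [IsFiniteMeasure Q] {c r C : ℝ} (hc : c ∈ Set.Icc 0 1) {ℓ ℓ' : 𝓐 → ℝ} (hℓ : Measurable ℓ)
    (hℓ' : Measurable ℓ') (hℓ_mem : ∀ t, ℓ t ∈ Set.Icc 0 C) (hℓ'_mem : ∀ t, ℓ' t ∈ Set.Icc 0 C)
    (hr : ∀ t, r ≤ ℓ t + ℓ' t) :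
    r * (min c (1 - c) - Ifc c P Q) ≤
      c * estimatorRisk ℓ κ P + (1 - c) * estimatorRisk ℓ' κ Q := by
  have hf_mem (o : Ω) : ∫ t, ℓ t ∂(κ o) ∈ Set.Icc 0 C := integral_mem_Icc hℓ hℓ_mem
  have hg_mem (o : Ω) : ∫ t, ℓ' t ∂(κ o) ∈ Set.Icc 0 C := integral_mem_Icc hℓ' hℓ'_mem
  refine mul_min_sub_Ifc_le_integral_add_integral hc
    (.of_mem_Icc 0 C hℓ.stronglyMeasurable.integral_kernel.measurable.aemeasurable
      (ae_of_all _ hf_mem))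
    (.of_mem_Icc 0 C hℓ'.stronglyMeasurable.integral_kernel.measurable.aemeasurable
      (ae_of_all _ hg_mem))
    (fun o => (hf_mem o).1) (fun o => (hg_mem o).1) fun o => ?_
  have hℓ_int : Integrable ℓ (κ o) := .of_mem_Icc 0 C hℓ.aemeasurable (ae_of_all _ hℓ_mem)
  have hℓ'_int : Integrable ℓ' (κ o) := .of_mem_Icc 0 C hℓ'.aemeasurable (ae_of_all _ hℓ'_mem)
  rw [← integral_add hℓ_int hℓ'_int]
  exact (convex_Ici r).integral_mem isClosed_Ici (ae_of_all _ hr) (hℓ_int.add hℓ'_int)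

end Risk

section Minimax

variable {Θ Ω 𝓐 : Type*} [MeasurableSpace Ω] [MeasurableSpace 𝓐] [Nonempty 𝓐]
  {P : Θ → Measure Ω} [∀ θ, IsProbabilityMeasure (P θ)] {ℓ : Θ → 𝓐 → ℝ} {c : ℝ}

lemma mul_min_sub_Ifc_le_realMinimaxRisk (hℓ : ∀ θ, Measurable (ℓ θ))
    (hℓ_nonneg : ∀ θ t, 0 ≤ ℓ θ t) (hℓ_bdd : BddAbove (Set.range (Function.uncurry ℓ)))
    (hc : c ∈ Set.Icc 0 1) {θ θ' : Θ} {r : ℝ} (hr : ∀ t, r ≤ ℓ θ t + ℓ θ' t) :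
    r * (min c (1 - c) - Ifc c (P θ) (P θ')) ≤ realMinimaxRisk ℓ P := by
  obtain ⟨C, hC⟩ := hℓ_bdd
  have hℓ_mem (η : Θ) (t : 𝓐) : ℓ η t ∈ Set.Icc 0 C :=
    ⟨hℓ_nonneg η t, hC (Set.mem_range_self (η, t))⟩
  have : Nonempty {κ : Kernel Ω 𝓐 // IsMarkovKernel κ} :=
    ⟨⟨Kernel.const Ω (Measure.dirac (Classical.arbitrary 𝓐)), inferInstance⟩⟩
  refine le_ciInf fun ⟨κ, _⟩ => ?_
  set S := ⨆ η, estimatorRisk (ℓ η) κ (P η)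
  have risk_le (η : Θ) : estimatorRisk (ℓ η) κ (P η) ≤ S :=
    le_ciSup (f := fun η => estimatorRisk (ℓ η) κ (P η))
      ⟨C, Set.forall_mem_range.2 fun η => (estimatorRisk_mem_Icc (hℓ η) (hℓ_mem η)).2⟩ η
  calc r * (min c (1 - c) - Ifc c (P θ) (P θ'))
      ≤ c * estimatorRisk (ℓ θ) κ (P θ) + (1 - c) * estimatorRisk (ℓ θ') κ (P θ') :=
        mul_min_sub_Ifc_le_estimatorRisk_add_estimatorRisk hc (hℓ θ) (hℓ θ') (hℓ_mem θ)
          (hℓ_mem θ') hr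
    _ ≤ c * S + (1 - c) * S :=
        add_le_add (mul_le_mul_of_nonneg_left (risk_le θ) hc.1)
          (mul_le_mul_of_nonneg_left (risk_le θ') (sub_nonneg.2 hc.2))
    _ = S := by ring

theorem cost_dependent_bayesian_lower_bound_general [MeasurableSpace Θ]
    (hℓ : ∀ θ, Measurable (ℓ θ)) (hℓ_nonneg : ∀ θ t, 0 ≤ ℓ θ t)
    (hℓ_bdd : BddAbove (Set.range (Function.uncurry ℓ))) {δ : Θ → Θ → ℝ}
    (hδ : ∀ θ θ' t, δ θ θ' ≤ ℓ θ t + ℓ θ' t) (hc : c ∈ Set.Icc 0 1)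
    {μ : Measure (Θ × Θ)} [IsProbabilityMeasure μ]
    (hμ : Integrable (fun q => δ q.1 q.2 * (min c (1 - c) - Ifc c (P q.1) (P q.2))) μ) :
    ∫ q, δ q.1 q.2 * (min c (1 - c) - Ifc c (P q.1) (P q.2)) ∂μ ≤ realMinimaxRisk ℓ P :=
  (convex_Iic _).integral_mem isClosed_Iic (ae_of_all _ fun q =>
    mul_min_sub_Ifc_le_realMinimaxRisk hℓ hℓ_nonneg hℓ_bdd hc (hδ q.1 q.2)) hμ

end Minimax

/-- cost-dependent Bayesian lower bound. For any joint distribution `μ` of a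
pair `(θ, θ')` on `Θ × Θ` with equal marginals, the minimax risk
`R*_ρ = inf_κ sup_θ E_{O∼P_θⁿ} E_{θ̃∼κ(O)}[ρ(θ,θ̃)]` satisfies
`R*_ρ ≥ E_{(θ,θ')∼μ}[ρ(θ,θ')·(min(c,1−c) − I_{f_c}(P_θⁿ, P_{θ'}ⁿ))]`. -/
theorem cost_dependent_bayesian_lower_bound
    {O Θ : Type*} [MeasurableSpace O] [Fintype Θ] [MeasurableSpace Θ]
    [MeasurableSingletonClass Θ]
    (n : ℕ) (P : Θ → Measure O) [∀ θ, IsProbabilityMeasure (P θ)]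
    (ρ : Θ → Θ → ℝ) (hρ_nonneg : ∀ a b, 0 ≤ ρ a b) (hρ_self : ∀ a, ρ a a = 0)
    (hρ_symm : ∀ a b, ρ a b = ρ b a) (hρ_tri : ∀ a b d, ρ a d ≤ ρ a b + ρ b d)
    (μ : Measure (Θ × Θ)) [IsProbabilityMeasure μ]
    (hμ : μ.map Prod.fst = μ.map Prod.snd)
    (c : ℝ) (hc : c ∈ Set.Ioo (0 : ℝ) 1) :
    (⨅ κ : {κ : Kernel (Fin n → O) Θ // IsMarkovKernel κ},
      ⨆ θ : Θ, ∫ o, (∫ t, ρ θ t ∂(κ.1 o)) ∂(Measure.pi fun _ : Fin n => P θ))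
    ≥ ∫ q, ρ q.1 q.2 * (min c (1 - c)
          - Ifc c (Measure.pi fun _ : Fin n => P q.1)
                  (Measure.pi fun _ : Fin n => P q.2)) ∂μ := by
  have : Nonempty Θ := μ.nonempty_of_neZero.map Prod.fst
  exact cost_dependent_bayesian_lower_bound_general (P := fun θ => Measure.pi fun _ => P θ)
    (fun θ => measurable_of_finite (ρ θ)) hρ_nonneg (Set.finite_range _).bddAbove
    (fun a b t => hρ_symm b t ▸ hρ_tri a t b) (Set.Ioo_subset_Icc_self hc) .of_finite
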